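/- ∫_{-∞}^{∞} x · log(1 + e^{2x}) / (1 + e^{3x}) dx = -(1/144) · (16·π·G - 6·π²·log 2 + ζ(3)), where G := ∑_{n=0}^{∞} (-1)^n/(2n+1)² is the Catalan constant. -/

import Mathlib

/-!
Write `σ(y) = e^y / (1 + e^y)`. Since `log (1 + e^{2x}) = ∫_0^∞ 2 σ(2(x - c)) dc`, the integral is

`∫_0^∞ K(c) dc`, where `K(c) = 2 ∫_{-∞}^∞ x σ(2(x - c)) / (1 + e^{3x}) dx`;

the exchange is justified in `integrable_double`. For fixed `c`, partial fractions in `e^x`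
(`integral_inner_x`) reduce `K(c)` to three kinds of integrals:

* `∫ x (σ(2(x - c)) - σ(3x)) dx`, evaluated by comparing both terms with the Heaviside step and
  using `∫_0^∞ y / (e^y + 1) dy = π² / 12`;
* `∫ x e^x / (1 + e^{2(x - c)}) dx = c e^c π / 2`, by shifting and parity;
* `∫ x e^{jx} / (1 + e^{3x}) dx = ∓ 2π² / 27` for `j = 1, 2`, which reduces to the first kind.

Hence, with `q = e^{-c}`,

`K(c) = - c² q⁶ / (1 + q⁶) - π c q³ / (1 + q⁶) - (5π² / 108) q⁶ / (1 + q⁶)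
  + (4π² / 27) (q² - q⁴) / (1 + q⁶)`,

and `(q² - q⁴) / (1 + q⁶) = q² / (1 + q²) - q⁶ / (1 + q⁶)`. Integrating over `c > 0`, geometric
expansion turns the first two terms into `-ζ(3) / 144` and `-π G / 9`, while the last two have
logarithmic primitives and add up to `π² log 2 / 24`.
-/

open Real MeasureTheory

/-- The Catalan constant `G = ∑_{n=0}^∞ (-1)^n/(2n+1)²`. -/
noncomputable def catalanConstant : ℝ := ∑' n : ℕ, (-1) ^ n / (2 * (n : ℝ) + 1) ^ 2

open Set Filter Topology

/-! ### Exponential bounds and moments -/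

lemma integrable_exp_neg_mul_abs {b : ℝ} (hb : 0 < b) :
    Integrable (fun x : ℝ => exp (-(b * |x|))) := by
  rw [← integrableOn_univ, ← Iic_union_Ioi (a := (0 : ℝ))]
  refine IntegrableOn.union ?_ ?_
  · refine (integrableOn_exp_mul_Iic hb 0).congr_fun (fun x hx => ?_) measurableSet_Iic
    simp only [abs_of_nonpos (mem_Iic.1 hx)]
    congr 1; ring
  · refine (exp_neg_integrableOn_Ioi 0 hb).congr_fun (fun x hx => ?_) measurableSet_Ioi
    simp only [abs_of_pos (mem_Ioi.1 hx)]
    congr 1; ring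

lemma integrable_abs_mul_exp_neg_abs : Integrable (fun x : ℝ => |x| * exp (-|x|)) := by
  refine ((integrable_exp_neg_mul_abs (b := 1 / 2) (by norm_num)).const_mul 2).mono'
    (by fun_prop) (Eventually.of_forall fun x => ?_)
  have h1 : |x| ≤ 2 * exp (1 / 2 * |x|) := by
    have := add_one_le_exp (1 / 2 * |x|)
    linarith
  have h2 : exp (-|x|) = exp (-(1 / 2 * |x|)) * exp (-(1 / 2 * |x|)) := by
    rw [← exp_add]; congr 1; ring
  have h3 : exp (1 / 2 * |x|) * exp (-(1 / 2 * |x|)) = 1 := by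
    rw [← exp_add]; simp
  rw [norm_of_nonneg (by positivity), h2]
  calc |x| * (exp (-(1 / 2 * |x|)) * exp (-(1 / 2 * |x|)))
      ≤ 2 * exp (1 / 2 * |x|) * (exp (-(1 / 2 * |x|)) * exp (-(1 / 2 * |x|))) := by gcongr
    _ = 2 * (exp (1 / 2 * |x|) * exp (-(1 / 2 * |x|))) * exp (-(1 / 2 * |x|)) := by ring
    _ = _ := by rw [h3]; ring

lemma integral_pow_mul_exp_neg_Ioi (m : ℕ) {r : ℝ} (hr : 0 < r) :
    IntegrableOn (fun y : ℝ => y ^ m * exp (-(r * y))) (Ioi 0) ∧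
      ∫ y in Ioi (0 : ℝ), y ^ m * exp (-(r * y)) = m.factorial / r ^ (m + 1) := by
  constructor
  · have := integrableOn_rpow_mul_exp_neg_mul_rpow (p := 1) (s := m) (b := r)
      (by have : (0 : ℝ) ≤ m := m.cast_nonneg
          linarith) one_pos hr
    simpa [rpow_natCast] using this
  · have := integral_rpow_mul_exp_neg_mul_Ioi (a := m + 1) (r := r) (by positivity) hr
    rw [Gamma_nat_eq_factorial] at this
    simp only [add_sub_cancel_right, rpow_natCast] at this
    rw [this, show ((m : ℝ) + 1) = ((m + 1 : ℕ) : ℝ) by push_cast; rfl, rpow_natCast]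
    rw [div_pow, one_pow]; ring

/-! ### Fermi–Dirac integrals on the half-line -/

/-- Expanding `1 / (1 + e^{-by})` as a geometric series turns this Fermi–Dirac type integral into
an alternating Dirichlet-type series; `m ≥ 1` makes the exchange absolutely convergent. -/
lemma hasSum_integral_pow_mul_exp_div {m : ℕ} (hm : 1 ≤ m) {a b : ℝ} (ha : 0 < a) (hb : 0 < b) :
    HasSum (fun n : ℕ => (-1) ^ n * (m.factorial / (a + b * n) ^ (m + 1)))
      (∫ y in Ioi (0 : ℝ), y ^ m * exp (-(a * y)) / (1 + exp (-(b * y)))) := by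
  have hr (n : ℕ) : 0 < a + b * n := by positivity
  have key := hasSum_integral_of_summable_integral_norm
    (μ := volume.restrict (Ioi (0 : ℝ)))
    (F := fun (n : ℕ) (y : ℝ) => (-1) ^ n * (y ^ m * exp (-((a + b * n) * y))))
    (fun n => ((integral_pow_mul_exp_neg_Ioi m (hr n)).1).const_mul _) ?_
  · simp_rw [integral_const_mul, fun n : ℕ => (integral_pow_mul_exp_neg_Ioi m (hr n)).2] at key
    suffices h : ∫ y in Ioi (0 : ℝ), y ^ m * exp (-(a * y)) / (1 + exp (-(b * y))) = _ by
      rw [h]; exact key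
    refine setIntegral_congr_fun measurableSet_Ioi fun y hy => ?_
    have hy : 0 < y := hy
    have hlt : exp (-(b * y)) < 1 := by rw [exp_lt_one_iff]; nlinarith [mul_pos hb hy]
    have hg := (hasSum_geometric_of_abs_lt_one (r := -exp (-(b * y)))
      (by rw [abs_neg, abs_of_pos (exp_pos _)]; exact hlt)).mul_left (y ^ m * exp (-(a * y)))
    have hterm : (fun n : ℕ => (-1 : ℝ) ^ n * (y ^ m * exp (-((a + b * n) * y)))) =
        fun n : ℕ => y ^ m * exp (-(a * y)) * (-exp (-(b * y))) ^ n := by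
      funext n
      rw [neg_pow (exp _), ← exp_nat_mul,
        show -((a + b * n) * y) = -(a * y) + n * (-(b * y)) by ring, exp_add]
      ring
    simp only [hterm]
    rw [hg.tsum_eq, sub_neg_eq_add, div_eq_mul_inv]
  · have hnorm (n : ℕ) : ∫ y in Ioi (0 : ℝ), ‖(-1 : ℝ) ^ n * (y ^ m * exp (-((a + b * n) * y)))‖ =
        m.factorial / (a + b * n) ^ (m + 1) := by
      rw [← (integral_pow_mul_exp_neg_Ioi m (hr n)).2]
      refine setIntegral_congr_fun measurableSet_Ioi fun y hy => ?_
      have hy : 0 < y := hy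
      simp only [norm_mul, norm_pow, norm_neg, norm_one, one_pow, one_mul]
      rw [norm_of_nonneg hy.le, norm_of_nonneg (exp_pos _).le]
    simp_rw [hnorm]
    -- comparison with `∑ 1 / (n + 1) ^ (m + 1)`, using `a + b n ≥ min a b * (n + 1)`
    have hs : Summable fun n : ℕ => (1 : ℝ) / ((n : ℝ) + 1) ^ (m + 1) := by
      have := (summable_nat_add_iff 1).2
        (Real.summable_one_div_nat_pow (p := m + 1).2 (by omega))
      simpa using this
    set d := min a b with hd
    have hd0 : 0 < d := lt_min ha hb
    refine Summable.of_nonneg_of_le (fun n => by have := hr n; positivity) (fun n => ?_)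
      (hs.mul_left (m.factorial / d ^ (m + 1)))
    rw [div_mul_div_comm, mul_one, ← mul_pow]
    have h : d * (n + 1) ≤ a + b * n := by
      have h1 : d ≤ a := min_le_left _ _
      have h2 : d * n ≤ b * n := by gcongr; exact min_le_right _ _
      linarith
    gcongr

/-- The alternating series `∑ (-1)^n f n` in terms of `∑ f n = S` when `f (2n+1) = c f n`. -/
lemma hasSum_alternating {f : ℕ → ℝ} {S c : ℝ} (hf : HasSum f S)
    (hodd : ∀ n, f (2 * n + 1) = c * f n) :
    HasSum (fun n => (-1) ^ n * f n) (S - 2 * (c * S)) := by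
  have h1 : HasSum (fun n => f (2 * n + 1)) (c * S) := by
    simp_rw [hodd]; exact hf.mul_left c
  have he : Summable (fun n => f (2 * n)) :=
    hf.summable.comp_injective (fun a b h => by simpa using h)
  have h2 : HasSum (fun n => f (2 * n)) (S - c * S) := by
    have := (he.hasSum.even_add_odd h1).unique hf
    rw [show S - c * S = ∑' n, f (2 * n) by linarith]
    exact he.hasSum
  have := HasSum.even_add_odd (f := fun n => (-1) ^ n * f n) (m := S - c * S) (m' := -(c * S))
    (by simpa [pow_mul] using h2)
    (by simpa [pow_mul, pow_succ] using h1.neg)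
  convert this using 1; ring

lemma integral_fermi_one :
    ∫ y in Ioi (0 : ℝ), y * exp (-y) / (1 + exp (-y)) = π ^ 2 / 12 := by
  have h := hasSum_integral_pow_mul_exp_div (m := 1) le_rfl one_pos one_pos
  have hz : HasSum (fun n : ℕ => (1 : ℝ) / ((n : ℝ) + 1) ^ 2) (π ^ 2 / 6) := by
    have := (hasSum_nat_add_iff' (f := fun n : ℕ => (1 : ℝ) / (n : ℝ) ^ 2) 1).2 hasSum_zeta_two
    simpa using this
  have ha := hasSum_alternating (c := 1 / 4) hz (fun n => by push_cast; field_simp; ring)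
  have := h.unique (by simpa [add_comm] using ha)
  simp only [pow_one, one_mul] at this
  rw [this]; ring

lemma integral_fermi_two :
    ((∫ y in Ioi (0 : ℝ), y ^ 2 * exp (-(6 * y)) / (1 + exp (-(6 * y))) : ℝ) : ℂ) =
      riemannZeta 3 / 144 := by
  have h := hasSum_integral_pow_mul_exp_div (m := 2) (by norm_num) (a := 6) (b := 6)
    (by norm_num) (by norm_num)
  have hs : Summable (fun n : ℕ => (1 : ℝ) / (n : ℝ) ^ 3) :=
    Real.summable_one_div_nat_pow.2 (by norm_num)
  have hzeta : ((∑' n : ℕ, (1 : ℝ) / (n : ℝ) ^ 3 : ℝ) : ℂ) = riemannZeta 3 := by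
    have := zeta_nat_eq_tsum_of_gt_one (k := 3) (by norm_num)
    push_cast at this ⊢
    exact this.symm
  have hz : HasSum (fun n : ℕ => (1 : ℝ) / ((n : ℝ) + 1) ^ 3) (∑' n : ℕ, (1 : ℝ) / (n : ℝ) ^ 3) := by
    have := (hasSum_nat_add_iff' (f := fun n : ℕ => (1 : ℝ) / (n : ℝ) ^ 3) 1).2 hs.hasSum
    simpa using this
  have ha := (hasSum_alternating (c := 1 / 8) hz
    (fun n => by push_cast; field_simp; ring)).mul_left (1 / 108)
  have := h.unique (ha.congr_fun fun n => ?_)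
  · rw [this, ← hzeta]; push_cast; ring
  · simp only [Nat.factorial]; push_cast
    rw [show (6 + 6 * (n : ℝ)) = 6 * (n + 1) by ring, mul_pow]
    field_simp; norm_num

lemma integral_catalan :
    ∫ y in Ioi (0 : ℝ), y * exp (-(3 * y)) / (1 + exp (-(6 * y))) = catalanConstant / 9 := by
  have h := (hasSum_integral_pow_mul_exp_div (m := 1) le_rfl (a := 3) (b := 6)
    (by norm_num) (by norm_num)).mul_left 9
  have : catalanConstant = _ := (tsum_congr fun n => ?_).trans h.tsum_eq
  · simp only [pow_one] at this; rw [this]; ring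
  · simp only [Nat.factorial]; push_cast
    rw [show (3 + 6 * (n : ℝ)) = 3 * (2 * n + 1) by ring, mul_pow]
    field_simp; norm_num

lemma integral_exp_div {b : ℝ} (hb : 0 < b) :
    IntegrableOn (fun y : ℝ => exp (-(b * y)) / (1 + exp (-(b * y)))) (Ioi 0) ∧
    ∫ y in Ioi (0 : ℝ), exp (-(b * y)) / (1 + exp (-(b * y))) = Real.log 2 / b := by
  have hd (x : ℝ) : HasDerivAt (fun y => -(Real.log (1 + exp (-(b * y))) / b))
      (exp (-(b * x)) / (1 + exp (-(b * x)))) x := by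
    have h1 : HasDerivAt (fun y => 1 + exp (-(b * y))) (exp (-(b * x)) * (-(b * 1))) x :=
      (((hasDerivAt_id x).const_mul b).neg.exp).const_add 1
    refine ((h1.log (by positivity)).div_const b).neg.congr_deriv ?_
    field_simp
  have ht : Tendsto (fun y => -(Real.log (1 + exp (-(b * y))) / b)) atTop (𝓝 0) := by
    have h0 : Tendsto (fun y : ℝ => exp (-(b * y))) atTop (𝓝 0) :=
      tendsto_exp_neg_atTop_nhds_zero.comp (tendsto_id.const_mul_atTop hb)
    have h1 : Tendsto (fun y : ℝ => 1 + exp (-(b * y))) atTop (𝓝 1) := by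
      simpa using h0.const_add 1
    have := ((h1.log one_ne_zero).div_const b).neg
    simpa using this
  have hp : ∀ x ∈ Ioi (0 : ℝ), 0 ≤ exp (-(b * x)) / (1 + exp (-(b * x))) :=
    fun x _ => by positivity
  refine ⟨integrableOn_Ioi_deriv_of_nonneg' (fun x _ => hd x) hp ht, ?_⟩
  rw [integral_Ioi_of_hasDerivAt_of_nonneg' (fun x _ => hd x) hp ht]
  norm_num

/-! ### Logistic functions against the Heaviside step -/

/-- The logistic function `1 / (1 + e^{-y})` minus the Heaviside step. -/
noncomputable def logisticSubStep (y : ℝ) : ℝ := 1 / (1 + exp (-y)) - if 0 < y then 1 else 0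

lemma measurable_logisticSubStep : Measurable logisticSubStep := by
  unfold logisticSubStep
  exact (by fun_prop : Measurable fun y : ℝ => 1 / (1 + exp (-y))).sub
    (Measurable.ite measurableSet_Ioi measurable_const measurable_const)

lemma logisticSubStep_of_pos {y : ℝ} (hy : 0 < y) :
    logisticSubStep y = -(exp (-y) / (1 + exp (-y))) := by
  rw [logisticSubStep, if_pos hy]; field_simp; ring

lemma logisticSubStep_of_nonpos {y : ℝ} (hy : y ≤ 0) :
    logisticSubStep y = exp y / (1 + exp y) := by
  rw [logisticSubStep, if_neg (not_lt.2 hy), exp_neg]; field_simp; ring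

lemma logisticSubStep_neg {y : ℝ} (hy : y ≠ 0) : logisticSubStep (-y) = -logisticSubStep y := by
  rcases lt_or_gt_of_ne hy with h | h
  · rw [logisticSubStep_of_pos (neg_pos.2 h), logisticSubStep_of_nonpos h.le, neg_neg]
  · rw [logisticSubStep_of_pos h, logisticSubStep_of_nonpos (by linarith), neg_neg]

lemma abs_logisticSubStep_le (y : ℝ) : |logisticSubStep y| ≤ exp (-|y|) := by
  have key (z : ℝ) : exp z / (1 + exp z) ≤ exp z := div_le_self (exp_pos z).le (by
    linarith [exp_pos z])
  rcases le_or_gt y 0 with h | h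
  · rw [logisticSubStep_of_nonpos h, abs_of_nonneg (by positivity), abs_of_nonpos h, neg_neg]
    exact key y
  · rw [logisticSubStep_of_pos h, abs_neg, abs_of_nonneg (by positivity), abs_of_pos h]
    exact key (-y)

lemma integrable_logisticSubStep {k : ℝ} (hk : 0 < k) :
    Integrable (fun x => logisticSubStep (k * x)) := by
  have : Integrable logisticSubStep := by
    refine (integrable_exp_neg_mul_abs one_pos).mono'
      measurable_logisticSubStep.aestronglyMeasurable (Eventually.of_forall fun x => ?_)
    simpa using abs_logisticSubStep_le x
  exact this.comp_mul_left' hk.ne'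

lemma integrable_mul_logisticSubStep {k : ℝ} (hk : 0 < k) :
    Integrable (fun x => x * logisticSubStep (k * x)) := by
  have : Integrable (fun y => y * logisticSubStep y) := by
    refine integrable_abs_mul_exp_neg_abs.mono'
      (measurable_id.mul measurable_logisticSubStep).aestronglyMeasurable
      (Eventually.of_forall fun x => ?_)
    rw [norm_mul, norm_eq_abs, norm_eq_abs]
    exact mul_le_mul_of_nonneg_left (abs_logisticSubStep_le x) (abs_nonneg x)
  refine ((this.comp_mul_left' hk.ne').const_mul k⁻¹).congr (Eventually.of_forall fun x => ?_)
  simp only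
  field_simp

lemma integral_logisticSubStep (k : ℝ) : ∫ x, logisticSubStep (k * x) = 0 := by
  have h : ∫ y, logisticSubStep y = 0 := by
    have h1 : ∫ y, logisticSubStep (-y) = ∫ y, -logisticSubStep y := by
      refine integral_congr_ae ?_
      filter_upwards [Measure.ae_ne volume (0 : ℝ)] with y hy using logisticSubStep_neg hy
    rw [integral_neg_eq_self, integral_neg] at h1
    linarith
  rw [Measure.integral_comp_mul_left, h, smul_zero]

lemma integral_mul_logisticSubStep {k : ℝ} (hk : 0 < k) :
    ∫ x, x * logisticSubStep (k * x) = -(π ^ 2 / (6 * k ^ 2)) := by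
  have h : ∫ y, y * logisticSubStep y = -(π ^ 2 / 6) := by
    have h1 : ∀ y : ℝ, y * logisticSubStep y =
        (fun u : ℝ => -(u * exp (-u) / (1 + exp (-u)))) |y| := fun y => by
      rcases le_or_gt y 0 with h | h
      · simp only [logisticSubStep_of_nonpos h, abs_of_nonpos h, neg_neg]; ring
      · simp only [logisticSubStep_of_pos h, abs_of_pos h]; ring
    simp_rw [h1]
    rw [integral_comp_abs (f := fun u : ℝ => -(u * exp (-u) / (1 + exp (-u)))), integral_neg,
      integral_fermi_one]
    ring
  have h2 : ∀ x, x * logisticSubStep (k * x) =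
      k⁻¹ * ((fun y => y * logisticSubStep y) (k * x)) := fun x => by
    simp only; field_simp
  rw [integral_congr_ae (Eventually.of_forall h2), integral_const_mul,
    Measure.integral_comp_mul_left (fun y => y * logisticSubStep y), h, abs_of_pos (inv_pos.2 hk), smul_eq_mul]
  field_simp

lemma integral_mul_indicator_Ioc {c : ℝ} (hc : 0 < c) :
    Integrable ((Ioc (-c) 0).indicator fun y : ℝ => y + c) ∧
    ∫ y, (Ioc (-c) 0).indicator (fun y : ℝ => y + c) y = c ^ 2 / 2 := by
  constructor
  · rw [integrable_indicator_iff measurableSet_Ioc]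
    exact (by fun_prop : Continuous fun y : ℝ => y + c).integrableOn_Ioc
  · rw [integral_indicator measurableSet_Ioc, ← intervalIntegral.integral_of_le (by linarith),
      intervalIntegral.integral_add (by simp) (by simp), integral_id]
    simp; ring

/-- The two logistic functions are compared with the common Heaviside step; after the shift
`x = y + c` the two steps differ by the indicator of `(-c, 0]`, which contributes `-c² / 2`. -/
lemma integral_mul_logistic_sub {c : ℝ} (hc : 0 < c) :
    Integrable (fun x => x * (1 / (1 + exp (-(2 * (x - c)))) - 1 / (1 + exp (-(3 * x))))) ∧
    ∫ x, x * (1 / (1 + exp (-(2 * (x - c)))) - 1 / (1 + exp (-(3 * x)))) =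
      -(c ^ 2 / 2) - 5 * π ^ 2 / 216 := by
  set g : ℝ → ℝ := fun y => y * logisticSubStep (2 * y) + c * logisticSubStep (2 * y) -
    (Ioc (-c) 0).indicator (fun y : ℝ => y + c) y with hg
  have i1 := integrable_mul_logisticSubStep (k := 2) two_pos
  have i2 := (integrable_logisticSubStep (k := 2) two_pos).const_mul c
  obtain ⟨i3, v3⟩ := integral_mul_indicator_Ioc hc
  have i4 := integrable_mul_logisticSubStep (k := 3) three_pos
  have ig : Integrable g := (i1.add i2).sub i3
  have vg : ∫ y, g y = -(π ^ 2 / 24) - c ^ 2 / 2 := by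
    have := integral_sub (i1.add i2) i3
    simp only [Pi.add_apply] at this
    rw [hg, this, integral_add i1 i2, integral_mul_logisticSubStep two_pos,
      integral_const_mul, integral_logisticSubStep, v3]
    ring
  have heq : (fun x => x * (1 / (1 + exp (-(2 * (x - c)))) - 1 / (1 + exp (-(3 * x))))) =
      fun x => g (x - c) - x * logisticSubStep (3 * x) := by
    funext x
    simp only [hg, logisticSubStep, indicator, mem_Ioc]
    have e1 : (0 < 3 * x) ↔ 0 < x := by constructor <;> intro <;> linarith
    have e2 : (0 < 2 * (x - c)) ↔ c < x := by constructor <;> intro <;> linarith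
    have e3 : (-c < x - c ∧ x - c ≤ 0) ↔ (0 < x ∧ x ≤ c) := by
      constructor <;> rintro ⟨_, _⟩ <;> constructor <;> linarith
    simp only [e1, e2, e3]
    rcases le_or_gt x 0 with h | h
    · rw [if_neg (by linarith), if_neg (by rintro ⟨_, _⟩; linarith), if_neg (by linarith)]; ring
    · rcases le_or_gt x c with h' | h'
      · rw [if_neg (by linarith), if_pos ⟨h, h'⟩, if_pos h]; ring
      · rw [if_pos h', if_neg (by rintro ⟨_, _⟩; linarith), if_pos h]; ring
  rw [heq]
  refine ⟨(ig.comp_sub_right c).sub i4, ?_⟩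
  rw [integral_sub (ig.comp_sub_right c) i4, integral_sub_right_eq_self g c, vg,
    integral_mul_logisticSubStep three_pos]
  ring

/-! ### The remaining partial fraction integrals -/

lemma exp_div_one_add_exp_two_le (y : ℝ) : exp y / (1 + exp (2 * y)) ≤ exp (-|y|) := by
  have h2 : exp (2 * y) = exp y * exp y := by rw [← exp_add]; congr 1; ring
  rw [h2, div_le_iff₀ (by positivity)]
  rcases le_or_gt y 0 with h | h
  · rw [abs_of_nonpos h, neg_neg]
    nlinarith [exp_pos y, mul_pos (exp_pos y) (mul_pos (exp_pos y) (exp_pos y))]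
  · rw [abs_of_pos h]
    have : exp (-y) * exp y = 1 := by rw [← exp_add]; simp
    nlinarith [exp_pos (-y), exp_pos y]

lemma integral_exp_div_one_add_exp_two :
    Integrable (fun y => exp y / (1 + exp (2 * y))) ∧
    ∫ y, exp y / (1 + exp (2 * y)) = π / 2 := by
  have hi : Integrable (fun y => exp y / (1 + exp (2 * y))) := by
    refine (integrable_exp_neg_mul_abs one_pos).mono'
      (Measurable.aestronglyMeasurable (by fun_prop)) (Eventually.of_forall fun x => ?_)
    rw [norm_of_nonneg (by positivity), one_mul]
    exact exp_div_one_add_exp_two_le x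
  refine ⟨hi, ?_⟩
  have hd (x : ℝ) : HasDerivAt (fun y => arctan (exp y)) (exp x / (1 + exp (2 * x))) x := by
    refine (Real.hasDerivAt_exp x).arctan.congr_deriv ?_
    rw [show exp (2 * x) = exp x ^ 2 by rw [← exp_nat_mul]; norm_num]; ring
  have hbot : Tendsto (fun y => arctan (exp y)) atBot (𝓝 0) := by
    simpa [Function.comp_def] using (continuous_arctan.tendsto 0).comp tendsto_exp_atBot
  have htop : Tendsto (fun y => arctan (exp y)) atTop (𝓝 (π / 2)) :=
    (tendsto_arctan_atTop.mono_right nhdsWithin_le_nhds).comp tendsto_exp_atTop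
  rw [integral_of_hasDerivAt_of_tendsto hd hi hbot htop, sub_zero]

/-- Centring at `c` leaves an odd integrand plus `c` times the integral of `1 / (2 cosh)`. -/
lemma integral_mul_exp_div_one_add_exp_two (c : ℝ) :
    Integrable (fun x => x * exp x / (1 + exp (2 * (x - c)))) ∧
    ∫ x, x * exp x / (1 + exp (2 * (x - c))) = c * exp c * (π / 2) := by
  obtain ⟨i1, v1⟩ := integral_exp_div_one_add_exp_two
  have i2 : Integrable (fun y => y * (exp y / (1 + exp (2 * y)))) := by
    refine integrable_abs_mul_exp_neg_abs.mono'
      (Measurable.aestronglyMeasurable (by fun_prop)) (Eventually.of_forall fun x => ?_)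
    rw [norm_mul, norm_eq_abs, norm_of_nonneg (by positivity)]
    exact mul_le_mul_of_nonneg_left (exp_div_one_add_exp_two_le x) (abs_nonneg x)
  have v2 : ∫ y, y * (exp y / (1 + exp (2 * y))) = 0 := by
    have h1 : ∫ y, (fun y => y * (exp y / (1 + exp (2 * y)))) (-y) =
        ∫ y, -(y * (exp y / (1 + exp (2 * y)))) := by
      congr 1; funext y
      simp only
      rw [show exp (2 * -y) = (exp y ^ 2)⁻¹ by rw [← exp_nat_mul, ← exp_neg]; congr 1; push_cast; ring,
        show exp (2 * y) = exp y ^ 2 by rw [← exp_nat_mul]; norm_num, exp_neg]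
      field_simp; ring
    rw [integral_neg_eq_self (fun y => y * (exp y / (1 + exp (2 * y)))), integral_neg] at h1
    linarith
  set g : ℝ → ℝ := fun y => exp c * (y * (exp y / (1 + exp (2 * y)))) +
    c * exp c * (exp y / (1 + exp (2 * y))) with hg
  have ig : Integrable g := (i2.const_mul _).add (i1.const_mul _)
  have heq : (fun x => x * exp x / (1 + exp (2 * (x - c)))) = fun x => g (x - c) := by
    funext x
    simp only [hg]
    rw [show exp x = exp c * exp (x - c) by rw [← exp_add]; congr 1; ring]
    ring
  rw [heq]
  refine ⟨ig.comp_sub_right c, ?_⟩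
  rw [integral_sub_right_eq_self g c, hg, integral_add (i2.const_mul _) (i1.const_mul _),
    integral_const_mul, integral_const_mul, v1, v2]
  ring

lemma integrable_mul_exp_div_one_add_exp_three :
    Integrable (fun x => x * exp x / (1 + exp (3 * x))) := by
  refine integrable_abs_mul_exp_neg_abs.mono'
    (Measurable.aestronglyMeasurable (by fun_prop)) (Eventually.of_forall fun x => ?_)
  rw [mul_div_assoc, norm_mul, norm_eq_abs, norm_of_nonneg (by positivity)]
  refine mul_le_mul_of_nonneg_left ?_ (abs_nonneg x)
  have h3 : exp (3 * x) = exp x ^ 3 := by rw [← exp_nat_mul]; norm_num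
  have hp := exp_pos x
  rw [h3, div_le_iff₀ (by positivity)]
  rcases le_or_gt x 0 with h | h
  · rw [abs_of_nonpos h, neg_neg]
    nlinarith [pow_pos hp 4]
  · rw [abs_of_pos h, exp_neg]
    have h1 : 1 ≤ exp x := one_le_exp h.le
    field_simp
    nlinarith [sq_nonneg (exp x), mul_nonneg (sq_nonneg (exp x)) (sub_nonneg.2 h1)]

/-- Under `x ↦ -x` the two integrals are exchanged up to sign, and their difference is the integral
of `x` against a difference of logistic functions because
`(T² - T) / (1 + T³) = T³ / (1 + T³) - T / (1 + T)`. -/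
lemma integral_mul_exp_div_one_add_exp_three :
    Integrable (fun x => x * exp (2 * x) / (1 + exp (3 * x))) ∧
    ∫ x, x * exp x / (1 + exp (3 * x)) = -(2 * π ^ 2 / 27) ∧
    ∫ x, x * exp (2 * x) / (1 + exp (3 * x)) = 2 * π ^ 2 / 27 := by
  have i1 := integrable_mul_exp_div_one_add_exp_three
  have h2 (x : ℝ) : exp (2 * x) = exp x ^ 2 := by rw [← exp_nat_mul]; norm_num
  have h3 (x : ℝ) : exp (3 * x) = exp x ^ 3 := by rw [← exp_nat_mul]; norm_num
  have heq : (fun x => x * exp (2 * x) / (1 + exp (3 * x))) =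
      fun x => -(fun x => x * exp x / (1 + exp (3 * x))) (-x) := by
    funext x
    simp only [h2, h3, exp_neg]
    field_simp; ring
  have i2 : Integrable (fun x => x * exp (2 * x) / (1 + exp (3 * x))) := by
    rw [heq]; exact i1.comp_neg.neg
  have v2 : ∫ x, x * exp (2 * x) / (1 + exp (3 * x)) = -∫ x, x * exp x / (1 + exp (3 * x)) := by
    rw [heq, integral_neg, integral_neg_eq_self (fun x => x * exp x / (1 + exp (3 * x)))]
  have v : (∫ x, x * exp (2 * x) / (1 + exp (3 * x))) - ∫ x, x * exp x / (1 + exp (3 * x)) =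
      4 * π ^ 2 / 27 := by
    rw [← integral_sub i2 i1]
    have : ∀ x, x * exp (2 * x) / (1 + exp (3 * x)) - x * exp x / (1 + exp (3 * x)) =
        x * logisticSubStep (3 * x) - x * logisticSubStep (1 * x) := fun x => by
      have e1 : (0 < 3 * x) ↔ 0 < x := by constructor <;> intro <;> linarith
      simp only [logisticSubStep, e1, one_mul, h2, h3, exp_neg]
      have hp := exp_pos x
      field_simp; ring
    simp_rw [this]
    rw [integral_sub (integrable_mul_logisticSubStep three_pos)
      (integrable_mul_logisticSubStep one_pos), integral_mul_logisticSubStep three_pos,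
      integral_mul_logisticSubStep one_pos]
    ring
  refine ⟨i2, ?_, ?_⟩ <;> linarith

/-! ### The double integral -/

lemma integral_linear_combination {μ : Measure ℝ} {f₁ f₂ f₃ f₄ : ℝ → ℝ} (h₁ : Integrable f₁ μ)
    (h₂ : Integrable f₂ μ) (h₃ : Integrable f₃ μ) (h₄ : Integrable f₄ μ) (a b c d : ℝ) :
    ∫ x, (a * f₁ x + b * f₂ x + c * f₃ x + d * f₄ x) ∂μ =
      a * (∫ x, f₁ x ∂μ) + b * (∫ x, f₂ x ∂μ) + c * (∫ x, f₃ x ∂μ) + d * ∫ x, f₄ x ∂μ := by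
  have h12 : Integrable (fun x => a * f₁ x + b * f₂ x) μ := (h₁.const_mul a).add (h₂.const_mul b)
  have h123 : Integrable (fun x => a * f₁ x + b * f₂ x + c * f₃ x) μ := h12.add (h₃.const_mul c)
  rw [integral_add h123 (h₄.const_mul d), integral_add h12 (h₃.const_mul c),
    integral_add (h₁.const_mul a) (h₂.const_mul b)]
  simp only [integral_const_mul]

/-- The integral in `x` of the two-variable integrand, for `c > 0`. With `T = e^x` and `q = e^{-c}`
the partial fraction decomposition is
`(1 + q⁶) · q²T² / ((1 + q²T²)(1 + T³)) = q⁶ (q²T² / (1 + q²T²) - T³ / (1 + T³))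
  - q⁴ T / (1 + q²T²) + q² T² / (1 + T³) + q⁴ T / (1 + T³)`. -/
lemma integral_inner_x {c : ℝ} (hc : 0 < c) :
    ∫ x, x * (2 * (exp (2 * (x - c)) / (1 + exp (2 * (x - c))))) / (1 + exp (3 * x)) =
      -(c ^ 2 * exp (-(6 * c)) / (1 + exp (-(6 * c))))
        - 5 * π ^ 2 / 108 * (exp (-(6 * c)) / (1 + exp (-(6 * c))))
        - π * (c * exp (-(3 * c)) / (1 + exp (-(6 * c))))
        + 4 * π ^ 2 / 27 * (exp (-(2 * c)) / (1 + exp (-(2 * c)))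
          - exp (-(6 * c)) / (1 + exp (-(6 * c)))) := by
  obtain ⟨i1, v1⟩ := integral_mul_logistic_sub hc
  obtain ⟨i2, v2⟩ := integral_mul_exp_div_one_add_exp_two c
  have i4 := integrable_mul_exp_div_one_add_exp_three
  obtain ⟨i3, v4, v3⟩ := integral_mul_exp_div_one_add_exp_three
  set q := exp (-c) with hq
  have hq0 : 0 < q := exp_pos _
  have q2 : exp (-(2 * c)) = q ^ 2 := by rw [hq, ← exp_nat_mul]; congr 1; push_cast; ring
  have q3 : exp (-(3 * c)) = q ^ 3 := by rw [hq, ← exp_nat_mul]; congr 1; push_cast; ring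
  have q6 : exp (-(6 * c)) = q ^ 6 := by rw [hq, ← exp_nat_mul]; congr 1; push_cast; ring
  have qc : exp c = q⁻¹ := by rw [hq, exp_neg, inv_inv]
  have heq : ∀ x : ℝ,
      x * (2 * (exp (2 * (x - c)) / (1 + exp (2 * (x - c))))) / (1 + exp (3 * x)) =
      2 * q ^ 6 / (1 + q ^ 6) *
          (x * (1 / (1 + exp (-(2 * (x - c)))) - 1 / (1 + exp (-(3 * x)))))
        + -(2 * q ^ 4 / (1 + q ^ 6)) * (x * exp x / (1 + exp (2 * (x - c))))
        + 2 * q ^ 2 / (1 + q ^ 6) * (x * exp (2 * x) / (1 + exp (3 * x)))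
        + 2 * q ^ 4 / (1 + q ^ 6) * (x * exp x / (1 + exp (3 * x))) := fun x => by
    have t2 : exp (2 * x) = exp x ^ 2 := by rw [← exp_nat_mul]; norm_num
    have t3 : exp (3 * x) = exp x ^ 3 := by rw [← exp_nat_mul]; norm_num
    have tc : exp (2 * (x - c)) = q ^ 2 * exp x ^ 2 := by
      rw [← q2, ← t2, ← exp_add]; congr 1; ring
    have hT := exp_pos x
    rw [exp_neg (2 * (x - c)), exp_neg (3 * x), tc, t2, t3]
    field_simp
    ring
  rw [integral_congr_ae (Eventually.of_forall heq),
    integral_linear_combination i1 i2 i3 i4, v1, v2, v3, v4, q2, q3, q6, qc]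
  field_simp
  ring

lemma integral_inner_c (x : ℝ) :
    ∫ c in Ioi (0 : ℝ), 2 * (exp (2 * (x - c)) / (1 + exp (2 * (x - c)))) =
      Real.log (1 + exp (2 * x)) := by
  have hd (c : ℝ) : HasDerivAt (fun c => -Real.log (1 + exp (2 * (x - c))))
      (2 * (exp (2 * (x - c)) / (1 + exp (2 * (x - c))))) c := by
    have h1 : HasDerivAt (fun c => 1 + exp (2 * (x - c))) (exp (2 * (x - c)) * (2 * (-1))) c :=
      (((hasDerivAt_id c).const_sub x).const_mul 2).exp.const_add 1
    refine (h1.log (by positivity)).neg.congr_deriv ?_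
    ring
  have ht : Tendsto (fun c => -Real.log (1 + exp (2 * (x - c)))) atTop (𝓝 0) := by
    have h0 : Tendsto (fun c : ℝ => exp (2 * (x - c))) atTop (𝓝 0) :=
      tendsto_exp_atBot.comp
        ((tendsto_atBot_add_const_left _ x tendsto_neg_atTop_atBot).const_mul_atBot two_pos)
    have h1 : Tendsto (fun c : ℝ => 1 + exp (2 * (x - c))) atTop (𝓝 1) := by
      simpa using h0.const_add 1
    simpa using (h1.log one_ne_zero).neg
  rw [integral_Ioi_of_hasDerivAt_of_nonneg' (fun c _ => hd c) (fun c _ => by positivity) ht]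
  simp

/-- Domination by `|x| e^x / (1 + e^{3x}) · e^{-c}`, from `2w² / (1 + w²) ≤ w` with
`w = e^{x - c}`. -/
lemma integrable_double :
    Integrable (Function.uncurry fun x c : ℝ =>
        x * (2 * (exp (2 * (x - c)) / (1 + exp (2 * (x - c))))) / (1 + exp (3 * x)))
      (volume.prod (volume.restrict (Ioi (0 : ℝ)))) := by
  have hc : Integrable (fun c : ℝ => exp (-c)) (volume.restrict (Ioi (0 : ℝ))) := by
    simpa [IntegrableOn] using exp_neg_integrableOn_Ioi 0 one_pos
  refine (integrable_mul_exp_div_one_add_exp_three.norm.mul_prod hc).mono'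
    (Measurable.aestronglyMeasurable (by unfold Function.uncurry; fun_prop))
    (Eventually.of_forall fun ⟨x, c⟩ => ?_)
  simp only [Function.uncurry]
  rw [norm_div, norm_div, norm_mul x, norm_mul x, norm_of_nonneg (exp_pos x).le,
    norm_of_nonneg (by positivity : 0 ≤ 2 * (exp (2 * (x - c)) / (1 + exp (2 * (x - c))))),
    div_mul_eq_mul_div, mul_assoc, ← exp_add, ← sub_eq_add_neg]
  gcongr
  have h2 : exp (2 * (x - c)) = exp (x - c) * exp (x - c) := by rw [← exp_add]; congr 1; ring
  have hw := exp_pos (x - c)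
  rw [h2, ← mul_div_assoc, div_le_iff₀ (by positivity)]
  nlinarith [mul_nonneg hw.le (sq_nonneg (exp (x - c) - 1))]

/-- `∫_{-∞}^∞ x·log(1+e^{2x})/(1+e^{3x}) dx = -(1/144)·(16πG - 6π²·log 2 + ζ(3))`,
where `G` is the Catalan constant. -/
theorem integral_x_log_exp_two_three :
    ((∫ x : ℝ, x * Real.log (1 + Real.exp (2 * x)) / (1 + Real.exp (3 * x)) : ℝ) : ℂ) =
      -(1 / 144) * (16 * (π : ℂ) * (catalanConstant : ℂ) -
        6 * (π : ℂ) ^ 2 * (Real.log 2 : ℂ) + riemannZeta 3) := by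
  have i6 := (integral_exp_div (b := 6) (by norm_num))
  have i2 := (integral_exp_div (b := 2) (by norm_num))
  have integrable_moment (m : ℕ) {a b : ℝ} (ha : 0 < a) : Integrable
      (fun c : ℝ => c ^ m * exp (-(a * c)) / (1 + exp (-(b * c))))
      (volume.restrict (Ioi (0 : ℝ))) := by
    refine (integral_pow_mul_exp_neg_Ioi m ha).1.mono'
      (Measurable.aestronglyMeasurable (by fun_prop))
      ((ae_restrict_mem measurableSet_Ioi).mono fun c hc => ?_)
    have hc : 0 < c := hc
    rw [norm_of_nonneg (by positivity)]
    exact div_le_self (by positivity) (by linarith [exp_pos (-(b * c))])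
  have j2 := integrable_moment 2 (a := 6) (b := 6) (by norm_num)
  have j1 := integrable_moment 1 (a := 3) (b := 6) (by norm_num)
  simp only [pow_one] at j1
  have key : ∫ x : ℝ, x * Real.log (1 + exp (2 * x)) / (1 + exp (3 * x)) =
      -(∫ c in Ioi (0 : ℝ), c ^ 2 * exp (-(6 * c)) / (1 + exp (-(6 * c))))
        - π * catalanConstant / 9 + π ^ 2 * Real.log 2 / 24 := by
    calc ∫ x : ℝ, x * Real.log (1 + exp (2 * x)) / (1 + exp (3 * x))
        = ∫ x : ℝ, ∫ c in Ioi (0 : ℝ),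
            x * (2 * (exp (2 * (x - c)) / (1 + exp (2 * (x - c))))) / (1 + exp (3 * x)) := by
          congr 1; funext x
          rw [integral_div, integral_const_mul, integral_inner_c]
      _ = ∫ c in Ioi (0 : ℝ), ∫ x : ℝ,
            x * (2 * (exp (2 * (x - c)) / (1 + exp (2 * (x - c))))) / (1 + exp (3 * x)) :=
          integral_integral_swap integrable_double
      _ = ∫ c in Ioi (0 : ℝ),
            (-1 * (c ^ 2 * exp (-(6 * c)) / (1 + exp (-(6 * c))))
              + -(5 * π ^ 2 / 108 + 4 * π ^ 2 / 27) * (exp (-(6 * c)) / (1 + exp (-(6 * c))))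
              + -π * (c * exp (-(3 * c)) / (1 + exp (-(6 * c))))
              + 4 * π ^ 2 / 27 * (exp (-(2 * c)) / (1 + exp (-(2 * c))))) :=
          setIntegral_congr_fun measurableSet_Ioi fun c hc => by
            simp only [integral_inner_x hc]; ring
      _ = _ := by
          rw [integral_linear_combination j2 i6.1 j1 i2.1, i2.2, i6.2, integral_catalan]
          ring
  rw [key]
  push_cast [integral_fermi_two]
  ring
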